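/- The connection W is a homothetically shrinking soliton: for every index j and every y ∈ ℝⁿ, Σ_i (∂_i F_{ij}(y) + [W_i(y), F_{ij}(y)]) = (1/2)·Σ_i y_i F_{ij}(y); equivalently, the curvature of W satisfies D_W*F_W + (1/2) y·F_W = 0, where D_W* is the formal adjoint of the covariant differential associated with W and y· denotes interior product with the position vector. -/

import Mathlib

open scoped BigOperators

noncomputable section

/-- Euclidean space `ℝⁿ`. -/
abbrev En (n : ℕ) := EuclideanSpace ℝ (Fin n)

/-- `n × n` real matrices, represented entrywise. -/
abbrev Mat (n : ℕ) := Fin n → Fin n → ℝ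

variable {n : ℕ}

/-- Frobenius inner product `⟨A,B⟩_F = tr(AᵀB) = Σ_{μν} A_{μν} B_{μν}`. -/
def fipE (A B : Mat n) : ℝ := ∑ μ, ∑ ν, A μ ν * B μ ν

/-- Frobenius norm. -/
def fnormE (A : Mat n) : ℝ := Real.sqrt (fipE A A)

/-- Matrix commutator `[A, B] = AB − BA`, entrywise. -/
def brkt (A B : Mat n) : Mat n := fun μ ν => ∑ k, (A μ k * B k ν - B μ k * A k ν)

/-- `A` is skew-symmetric. -/
def skewM (A : Mat n) : Prop := ∀ μ ν, A ν μ = -A μ ν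

/-- Partial derivative `∂_i f` of a scalar function on `ℝⁿ`. -/
def pder (i : Fin n) (f : En n → ℝ) (y : En n) : ℝ :=
  fderiv ℝ f y (EuclideanSpace.single i 1)

/-- Euclidean Laplacian `Δf = Σ_i ∂_i ∂_i f` of a scalar function on `ℝⁿ`. -/
def lapS (f : En n → ℝ) (y : En n) : ℝ := ∑ i, pder i (fun z => pder i f z) y

/-- Componentwise partial derivative `∂_i u` of a matrix-valued function on `ℝⁿ`. -/
def pderM (i : Fin n) (u : En n → Mat n) (y : En n) : Mat n :=
  fun μ ν => pder i (fun z => u z μ ν) y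

/-- Componentwise Laplacian `Δu` of a matrix-valued function on `ℝⁿ`. -/
def lapM (u : En n → Mat n) (y : En n) : Mat n := fun μ ν => lapS (fun z => u z μ ν) y

/-- The constant `a = √(n−2)/(2√2)`. -/
def aC (n : ℕ) : ℝ := Real.sqrt ((n : ℝ) - 2) / (2 * Real.sqrt 2)

/-- The constant `b = (1/2)(6n − 12 − (n+2)√(2n−4))`. -/
def bC (n : ℕ) : ℝ := (1 / 2) * (6 * (n : ℝ) - 12 - ((n : ℝ) + 2) * Real.sqrt (2 * (n : ℝ) - 4))

/-- `σ_i(y)`, the skew matrix with entries `(σ_i(y))^μ_ν = δ_{iν} y^μ − δ_{iμ} y^ν`. -/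
def sigmaM (i : Fin n) (y : En n) : Mat n :=
  fun μ ν => (if i = ν then y μ else 0) - (if i = μ then y ν else 0)

/-- The soliton connection `W_i(y) = σ_i(y)/(a|y|² + b)`. -/
def Wc (i : Fin n) (y : En n) : Mat n :=
  fun μ ν => sigmaM i y μ ν / (aC n * ‖y‖ ^ 2 + bC n)

/-- The curvature `F_{ij} = ∂_i W_j − ∂_j W_i + [W_i, W_j]` of the soliton connection `W`. -/
def Fc (i j : Fin n) (y : En n) : Mat n :=
  pderM i (Wc j) y - pderM j (Wc i) y + brkt (Wc i y) (Wc j y)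

/-- The linearized operator `L` of the rescaled Yang–Mills de Turck flow at the soliton `W`:
`(Lu)_j = Δu_j − (1/2)Σ_i y_i ∂_i u_j − (1/2)u_j + 2Σ_i [W_i, ∂_i u_j]
  + Σ_i [W_i, [W_i, u_j]] + 2Σ_i [u_i, F_{ij}]`. -/
def Lop (u : En n → Fin n → Mat n) (y : En n) (j : Fin n) : Mat n :=
  lapM (fun z => u z j) y
    - (1 / 2 : ℝ) • (∑ i, y i • pderM i (fun z => u z j) y)
    - (1 / 2 : ℝ) • u y j
    + (2 : ℝ) • ∑ i, brkt (Wc i y) (pderM i (fun z => u z j) y)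
    + ∑ i, brkt (Wc i y) (brkt (Wc i y) (u y j))
    + (2 : ℝ) • ∑ i, brkt (u y i) (Fc i j y)

/-- Squared Frobenius norm of a tuple of matrices: `‖u‖_F² = Σ_j ‖u_j‖_F²`. -/
def tnormSq (v : Fin n → Mat n) : ℝ := ∑ j, fipE (v j) (v j)

/-- The Gaussian weight `ρ(y) = e^{−|y|²/4}`. -/
def gauss (y : En n) : ℝ := Real.exp (-‖y‖ ^ 2 / 4)

end


open Finset

/-- Kronecker delta. -/
noncomputable def kd {n : ℕ} (i j : Fin n) : ℝ := if i = j then 1 else 0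

lemma kd_comm {n : ℕ} (i j : Fin n) : kd i j = kd j i := by
  simp only [kd, eq_comm]

lemma kd_self {n : ℕ} (i : Fin n) : kd i i = 1 := by simp [kd]

lemma sum_kd {n : ℕ} (i : Fin n) (g : Fin n → ℝ) : ∑ k, kd i k * g k = g i := by
  simp [kd]

/-- elementary skew matrix -/
noncomputable def eM {n : ℕ} (i j μ ν : Fin n) : ℝ := kd i μ * kd j ν - kd j μ * kd i ν

lemma sigma_eq {n : ℕ} (i : Fin n) (y : En n) (μ ν : Fin n) :
    sigmaM i y μ ν = kd i ν * y μ - kd i μ * y ν := by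
  simp [sigmaM, kd]

lemma norm_sq_eq {n : ℕ} (y : En n) : ‖y‖ ^ 2 = ∑ k, y k * y k := by
  rw [EuclideanSpace.real_norm_sq_eq]
  simp only [sq]

/-- Directional differentiability with value. -/
def HasP {n : ℕ} (i : Fin n) (f : En n → ℝ) (y : En n) (d : ℝ) : Prop :=
  ∃ L : En n →L[ℝ] ℝ, HasFDerivAt f L y ∧ L (EuclideanSpace.single i 1) = d

namespace HasP
variable {n : ℕ} {i : Fin n} {f g : En n → ℝ} {y : En n} {c d : ℝ}

lemma pder_eq (h : HasP i f y d) : pder i f y = d := by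
  obtain ⟨L, hL, rfl⟩ := h
  rw [pder, hL.fderiv]

lemma const (c : ℝ) : HasP i (fun _ => c) y 0 :=
  ⟨0, hasFDerivAt_const c y, by simp⟩

lemma coord (μ : Fin n) : HasP i (fun z => z μ) y (kd i μ) :=
  ⟨EuclideanSpace.proj μ, (EuclideanSpace.proj (𝕜 := ℝ) μ).hasFDerivAt, by
    simp [kd, eq_comm]⟩

lemma add (hf : HasP i f y c) (hg : HasP i g y d) : HasP i (fun z => f z + g z) y (c + d) := by
  obtain ⟨L, hL, rfl⟩ := hf
  obtain ⟨M, hM, rfl⟩ := hg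
  exact ⟨L + M, hL.add hM, by simp⟩

lemma sub (hf : HasP i f y c) (hg : HasP i g y d) : HasP i (fun z => f z - g z) y (c - d) := by
  obtain ⟨L, hL, rfl⟩ := hf
  obtain ⟨M, hM, rfl⟩ := hg
  exact ⟨L - M, hL.sub hM, by simp⟩

lemma mul (hf : HasP i f y c) (hg : HasP i g y d) :
    HasP i (fun z => f z * g z) y (c * g y + f y * d) := by
  obtain ⟨L, hL, rfl⟩ := hf
  obtain ⟨M, hM, rfl⟩ := hg
  exact ⟨_, hL.mul hM, by simp; ring⟩

lemma inv (hf : HasP i f y c) (h0 : f y ≠ 0) :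
    HasP i (fun z => (f z)⁻¹) y (-c * ((f y)⁻¹) ^ 2) := by
  obtain ⟨L, hL, rfl⟩ := hf
  refine ⟨_, (hasDerivAt_inv h0).comp_hasFDerivAt y hL, ?_⟩
  simp; ring

lemma normsq : HasP i (fun z => ‖z‖ ^ 2) y (2 * y i) := by
  refine ⟨_, (hasStrictFDerivAt_norm_sq y).hasFDerivAt, ?_⟩
  simp [EuclideanSpace.inner_single_right]

end HasP

lemma aC_nonneg (n : ℕ) : 0 ≤ aC n := by unfold aC; positivity

lemma aC_sq (n : ℕ) (hn : 5 ≤ n) : 8 * aC n ^ 2 = n - 2 := by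
  have h : (5:ℝ) ≤ n := by exact_mod_cast hn
  unfold aC
  rw [div_pow, mul_pow, Real.sq_sqrt (by linarith), Real.sq_sqrt (by norm_num)]
  ring

lemma bC_eq (n : ℕ) (hn : 5 ≤ n) : bC n = 3 * n - 6 - 2 * aC n * (n + 2) := by
  have h : (5:ℝ) ≤ n := by exact_mod_cast hn
  have h4 : Real.sqrt (2 * (n:ℝ) - 4) = 4 * aC n := by
    rw [Real.sqrt_eq_iff_mul_self_eq (by linarith) (by linarith [aC_nonneg n])]
    linarith [aC_sq n hn]
  rw [bC, h4]; ring

lemma bC_pos (n : ℕ) (hn : 5 ≤ n) (hn' : n ≤ 9) : 0 < bC n := by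
  have h : (5:ℝ) ≤ n := by exact_mod_cast hn
  have h' : (n:ℝ) ≤ 9 := by exact_mod_cast hn'
  rw [bC_eq n hn]
  have hs := aC_sq n hn
  have : 2 * aC n * (n + 2) < 3 * n - 6 := by
    apply lt_of_pow_lt_pow_left₀ 2 (by linarith)
    have : (2 * aC n * (n + 2)) ^ 2 = (n - 2) / 2 * (n + 2) ^ 2 := by
      rw [← hs]; ring
    rw [this]
    nlinarith [mul_pos (show (0:ℝ) < n - 2 by linarith) (mul_pos (show (0:ℝ) < n - 4 by linarith) (show (0:ℝ) < 10 - n by linarith))]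
  linarith

/-- The radial profile. -/
noncomputable def fR {n : ℕ} (z : En n) : ℝ := (aC n * ‖z‖ ^ 2 + bC n)⁻¹

lemma den_pos {n : ℕ} (hn : 5 ≤ n) (hn' : n ≤ 9) (y : En n) : 0 < aC n * ‖y‖ ^ 2 + bC n := by
  have := bC_pos n hn hn'
  have := aC_nonneg n
  positivity

lemma hasP_fR {n : ℕ} (hn : 5 ≤ n) (hn' : n ≤ 9) (i : Fin n) (y : En n) :
    HasP i fR y (-(2 * aC n * y i) * fR y ^ 2) := by
  have h := (((HasP.const (i := i) (y := y) (aC n)).mul HasP.normsq).add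
    (HasP.const (bC n))).inv (den_pos hn hn' y).ne'
  have e : -(2 * aC n * y i) * fR y ^ 2
      = -(0 * ‖y‖ ^ 2 + aC n * (2 * y i) + 0) * ((aC n * ‖y‖ ^ 2 + bC n)⁻¹) ^ 2 := by
    unfold fR; ring
  rw [e]
  exact h

lemma Wc_eq {n : ℕ} (i : Fin n) (y : En n) (μ ν : Fin n) :
    Wc i y μ ν = fR y * (kd i ν * y μ - kd i μ * y ν) := by
  rw [Wc, sigma_eq, fR, div_eq_mul_inv, mul_comm]

lemma hasP_sigma {n : ℕ} (i j : Fin n) (y : En n) (μ ν : Fin n) :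
    HasP i (fun z => kd j ν * z μ - kd j μ * z ν) y (eM i j μ ν) := by
  have h := ((HasP.const (i := i) (y := y) (kd j ν)).mul (HasP.coord μ)).sub
    ((HasP.const (kd j μ)).mul (HasP.coord ν))
  convert h using 1
  unfold eM; ring

lemma pderW {n : ℕ} (hn : 5 ≤ n) (hn' : n ≤ 9) (i j : Fin n) (y : En n) (μ ν : Fin n) :
    pderM i (Wc j) y μ ν = fR y * eM i j μ ν
      - 2 * aC n * fR y ^ 2 * y i * (kd j ν * y μ - kd j μ * y ν) := by
  simp only [pderM, Wc_eq]
  rw [((hasP_fR hn hn' i y).mul (hasP_sigma i j y μ ν)).pder_eq]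
  ring

lemma kd_mul_kd_sum {n : ℕ} (i j : Fin n) : ∑ k, kd i k * kd j k = kd i j := by
  rw [sum_kd, kd_comm]

lemma brkt_sigma {n : ℕ} (i j : Fin n) (y : En n) (μ ν : Fin n) :
    ∑ k, ((kd i k * y μ - kd i μ * y k) * (kd j ν * y k - kd j k * y ν)
      - (kd j k * y μ - kd j μ * y k) * (kd i ν * y k - kd i k * y ν))
    = y i * (kd j ν * y μ - kd j μ * y ν) - y j * (kd i ν * y μ - kd i μ * y ν)
      - ‖y‖ ^ 2 * eM i j μ ν := by
  have : ∀ k, ((kd i k * y μ - kd i μ * y k) * (kd j ν * y k - kd j k * y ν)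
      - (kd j k * y μ - kd j μ * y k) * (kd i ν * y k - kd i k * y ν))
      = (kd j ν * y μ - kd j μ * y ν) * (kd i k * y k)
        - (kd i ν * y μ - kd i μ * y ν) * (kd j k * y k) - eM i j μ ν * (y k * y k) := by
    intro k; unfold eM; ring
  simp only [this, sum_sub_distrib, ← mul_sum, sum_kd, norm_sq_eq]
  ring

lemma Fc_eq {n : ℕ} (hn : 5 ≤ n) (hn' : n ≤ 9) (i j : Fin n) (y : En n) (μ ν : Fin n) :
    Fc i j y μ ν = (2 * fR y - ‖y‖ ^ 2 * (fR y * fR y)) * eM i j μ ν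
      + (1 - 2 * aC n) * (fR y * fR y) * (y i * (kd j ν * y μ - kd j μ * y ν)
        - y j * (kd i ν * y μ - kd i μ * y ν)) := by
  have hb : brkt (Wc i y) (Wc j y) μ ν = fR y ^ 2 *
      (y i * (kd j ν * y μ - kd j μ * y ν) - y j * (kd i ν * y μ - kd i μ * y ν)
      - ‖y‖ ^ 2 * eM i j μ ν) := by
    rw [← brkt_sigma, brkt, mul_sum]
    refine sum_congr rfl fun k _ => ?_
    simp only [Wc_eq]; ring
  simp only [Fc, Pi.add_apply, Pi.sub_apply, hb, pderW hn hn']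
  have : eM j i μ ν = - eM i j μ ν := by unfold eM; ring
  rw [this]; ring

lemma hasP_F {n : ℕ} (hn : 5 ≤ n) (hn' : n ≤ 9) (i j : Fin n) (y : En n) (μ ν : Fin n) :
    pderM i (Fc i j) y μ ν =
      y i * eM i j μ ν * (-4 * aC n * fR y ^ 2 - 2 * fR y ^ 2 + 4 * aC n * ‖y‖ ^ 2 * fR y ^ 3)
      - 4 * aC n * (1 - 2 * aC n) * fR y ^ 3 * (y i * y i * (kd j ν * y μ - kd j μ * y ν)
        - y j * (y i * (kd i ν * y μ - kd i μ * y ν)))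
      + (1 - 2 * aC n) * fR y ^ 2 * ((kd j ν * y μ - kd j μ * y ν) + y i * eM i j μ ν
        - kd i j * (kd i ν * y μ - kd i μ * y ν)) := by
  have hf := hasP_fR hn hn' i y
  have h := ((((HasP.const 2).mul hf).sub (HasP.normsq.mul (hf.mul hf))).mul
    (HasP.const (eM i j μ ν))).add
    (((HasP.const (1 - 2 * aC n)).mul (hf.mul hf)).mul
      (((HasP.coord i).mul (hasP_sigma i j y μ ν)).sub
        ((HasP.coord j).mul (hasP_sigma i i y μ ν))))
  simp only [pderM, Fc_eq hn hn']
  rw [h.pder_eq, kd_self]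
  have : eM i i μ ν = 0 := by unfold eM; ring
  rw [this]; ring

lemma sum_y_eM {n : ℕ} (j : Fin n) (y : En n) (μ ν : Fin n) :
    ∑ i, y i * eM i j μ ν = kd j ν * y μ - kd j μ * y ν := by
  have : ∀ i, y i * eM i j μ ν = kd j ν * (kd μ i * y i) - kd j μ * (kd ν i * y i) := by
    intro i; rw [eM, kd_comm μ i, kd_comm ν i]; ring
  simp only [this, sum_sub_distrib, ← mul_sum, sum_kd]

lemma sum_y_sigma {n : ℕ} (y : En n) (μ ν : Fin n) :
    ∑ i, y i * (kd i ν * y μ - kd i μ * y ν) = 0 := by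
  have : ∀ i, y i * (kd i ν * y μ - kd i μ * y ν)
      = y μ * (kd ν i * y i) - y ν * (kd μ i * y i) := by
    intro i; rw [kd_comm μ i, kd_comm ν i]; ring
  simp only [this, sum_sub_distrib, ← mul_sum, sum_kd]
  ring

lemma sum_kd_sigma {n : ℕ} (j : Fin n) (y : En n) (μ ν : Fin n) :
    ∑ i, kd i j * (kd i ν * y μ - kd i μ * y ν) = kd j ν * y μ - kd j μ * y ν := by
  simp only [kd_comm _ j]
  exact sum_kd j (fun i => kd i ν * y μ - kd i μ * y ν)

lemma sum_brkt_e {n : ℕ} (j : Fin n) (y : En n) (μ ν : Fin n) :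
    ∑ i, ∑ k, ((kd i k * y μ - kd i μ * y k) * eM i j k ν
      - eM i j μ k * (kd i ν * y k - kd i k * y ν))
    = ((n:ℝ) - 2) * (kd j ν * y μ - kd j μ * y ν) := by
  have h1 : ∀ i, ∑ k, ((kd i k * y μ - kd i μ * y k) * eM i j k ν
      - eM i j μ k * (kd i ν * y k - kd i k * y ν))
      = (kd j ν * y μ - kd j μ * y ν)
        - kd j i * (kd i ν * y μ - kd i μ * y ν)
        - y i * eM i j μ ν := by
    intro i
    have : ∀ k, ((kd i k * y μ - kd i μ * y k) * eM i j k ν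
      - eM i j μ k * (kd i ν * y k - kd i k * y ν))
      = (kd j ν * y μ - kd j μ * y ν) * (kd i k * kd i k)
       - (kd i ν * y μ - kd i μ * y ν) * (kd j k * kd i k)
       - eM i j μ ν * (kd i k * y k)  := by
      intro k; unfold eM; ring
    simp only [this, sum_sub_distrib, ← mul_sum, sum_kd, kd_self]
    rw [kd_comm i j]
    ring
  simp only [h1, sum_sub_distrib, sum_y_eM]
  rw [sum_kd j (fun i => kd i ν * y μ - kd i μ * y ν)]
  simp
  ring

lemma sum_brkt_F {n : ℕ} (hn : 5 ≤ n) (hn' : n ≤ 9) (j : Fin n) (y : En n) (μ ν : Fin n) :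
    ∑ i, brkt (Wc i y) (Fc i j y) μ ν
      = ((n:ℝ) - 2) * fR y * (2 * fR y - ‖y‖ ^ 2 * (fR y * fR y))
        * (kd j ν * y μ - kd j μ * y ν) := by
  have h1 : ∀ i, brkt (Wc i y) (Fc i j y) μ ν
      = fR y * (2 * fR y - ‖y‖ ^ 2 * (fR y * fR y)) *
        ∑ k, ((kd i k * y μ - kd i μ * y k) * eM i j k ν
          - eM i j μ k * (kd i ν * y k - kd i k * y ν))
       + fR y * ((1 - 2 * aC n) * (fR y * fR y)) * (y i * (y i * (kd j ν * y μ - kd j μ * y ν)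
          - y j * (kd i ν * y μ - kd i μ * y ν) - ‖y‖ ^ 2 * eM i j μ ν)) := by
    intro i
    rw [← brkt_sigma, brkt, mul_sum, mul_sum, mul_sum, ← sum_add_distrib]
    refine sum_congr rfl fun k _ => ?_
    simp only [Wc_eq, Fc_eq hn hn']
    ring
  have h2 : ∑ i, y i * (y i * (kd j ν * y μ - kd j μ * y ν)
          - y j * (kd i ν * y μ - kd i μ * y ν) - ‖y‖ ^ 2 * eM i j μ ν) = 0 := by
    have : ∀ i, y i * (y i * (kd j ν * y μ - kd j μ * y ν)
          - y j * (kd i ν * y μ - kd i μ * y ν) - ‖y‖ ^ 2 * eM i j μ ν)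
        = (kd j ν * y μ - kd j μ * y ν) * (y i * y i)
          - y j * (y i * (kd i ν * y μ - kd i μ * y ν)) - ‖y‖ ^ 2 * (y i * eM i j μ ν) := by
      intro i; ring
    simp only [this, sum_sub_distrib, ← mul_sum, sum_y_eM, sum_y_sigma, ← norm_sq_eq]
    ring
  simp only [h1, sum_add_distrib, ← mul_sum, h2, sum_brkt_e]
  ring

lemma sum_pder_F {n : ℕ} (hn : 5 ≤ n) (hn' : n ≤ 9) (j : Fin n) (y : En n) (μ ν : Fin n) :
    ∑ i, pderM i (Fc i j) y μ ν
      = ((-4 * aC n * fR y ^ 2 - 2 * fR y ^ 2 + 4 * aC n * ‖y‖ ^ 2 * fR y ^ 3)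
        - 4 * aC n * (1 - 2 * aC n) * fR y ^ 3 * ‖y‖ ^ 2
        + (1 - 2 * aC n) * fR y ^ 2 * n) * (kd j ν * y μ - kd j μ * y ν) := by
  simp only [hasP_F hn hn', sum_add_distrib, sum_sub_distrib, ← mul_sum, ← sum_mul, sum_y_eM,
    sum_y_sigma, sum_kd_sigma, ← norm_sq_eq]
  simp
  ring

lemma sum_y_F {n : ℕ} (hn : 5 ≤ n) (hn' : n ≤ 9) (j : Fin n) (y : En n) (μ ν : Fin n) :
    ∑ i, y i * Fc i j y μ ν
      = ((2 * fR y - ‖y‖ ^ 2 * (fR y * fR y)) + (1 - 2 * aC n) * (fR y * fR y) * ‖y‖ ^ 2)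
        * (kd j ν * y μ - kd j μ * y ν) := by
  have : ∀ i, y i * Fc i j y μ ν = (2 * fR y - ‖y‖ ^ 2 * (fR y * fR y)) * (y i * eM i j μ ν)
      + (1 - 2 * aC n) * (fR y * fR y) * ((kd j ν * y μ - kd j μ * y ν) * (y i * y i)
        - y j * (y i * (kd i ν * y μ - kd i μ * y ν))) := by
    intro i; rw [Fc_eq hn hn']; ring
  simp only [this, sum_add_distrib, sum_sub_distrib, ← mul_sum, sum_y_eM,
    sum_y_sigma, ← norm_sq_eq]
  ring

/-- The connection `W` is a homothetically shrinking soliton: for every `j` and `y ∈ ℝⁿ`,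
`Σ_i (∂_i F_{ij}(y) + [W_i(y), F_{ij}(y)]) = (1/2)·Σ_i y_i F_{ij}(y)`; equivalently
`D_W* F_W + (1/2) y·F_W = 0`. -/
theorem W_is_shrinking_soliton (n : ℕ) (hn : 5 ≤ n) (hn' : n ≤ 9) (j : Fin n) (y : En n) :
    ∑ i, (pderM i (Fc i j) y + brkt (Wc i y) (Fc i j y))
      = (1 / 2 : ℝ) • ∑ i, y i • Fc i j y := by
  funext μ ν
  simp only [Finset.sum_apply, Pi.add_apply, Pi.smul_apply, smul_eq_mul]
  rw [sum_add_distrib, sum_pder_F hn hn', sum_brkt_F hn hn', sum_y_F hn hn', ← add_mul,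
    ← mul_assoc (1 / 2 : ℝ)]
  congr 1
  have hD := den_pos hn hn' y
  have ha := aC_sq n hn
  have hb := bC_eq n hn
  have hf : fR y = (aC n * ‖y‖ ^ 2 + bC n)⁻¹ := rfl
  have hn2 : (n : ℝ) = 8 * aC n ^ 2 + 2 := by linarith
  generalize aC n = a at *
  generalize bC n = b at *
  generalize ‖y‖ ^ 2 = s at *
  generalize fR y = f at *
  rw [hn2] at hb ⊢
  subst hf
  field_simp
  rw [hb]
  ring
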